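/- arXiv:1302.1336 — 2 statements merged into one kernel-verified Lean document; each statement's English description precedes it below -/
import Mathlib

section
/- Proposition 1(a) (real PPT-invariant representation): let P be an n-partite probability distribution with a quantum representation given by an n-partite quantum state ρ and projections M^s_{a|x}, and suppose that ρ^{T_m} is positive semidefinite for a given subset m ⊆ Fin n. Then P has a quantum representation by a state ρ' on the doubled spaces (Π s, Fin 2 × ι s) and real symmetric projections M̂^s_{a|x}, where ρ' has real entries and is PPT-invariant across m, i.e. ρ' = (ρ')ᵀ = (ρ')^{T_m}, and P(a₁,…,a_n|x₁,…,x_n) = tr[ρ'·(⊗_s M̂^s_{a_s|x_s})]. -/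
open Matrix
open scoped Kronecker ComplexOrder

/-- Partial transpose on the first tensor factor. -/
def ptA {ιA ιB : Type*} (ρ : Matrix (ιA × ιB) (ιA × ιB) ℂ) : Matrix (ιA × ιB) (ιA × ιB) ℂ :=
  fun p q => ρ (q.1, p.2) (p.1, q.2)

/-- Sum of the absolute values of the negative eigenvalues of a Hermitian matrix
(0 if the matrix is not Hermitian). -/
noncomputable def negEig {ι : Type*} [Fintype ι] [DecidableEq ι] (M : Matrix ι ι ℂ) : ℝ :=
  letI := Classical.dec M.IsHermitian
  if h : M.IsHermitian then ∑ i, max 0 (-(h.eigenvalues i)) else 0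
/-- The 2×2 matrix Y = [[0,1],[-1,0]] (viewed as a complex matrix). -/
noncomputable def Ymat : Matrix (Fin 2) (Fin 2) ℂ := !![0, 1; -1, 0]

/-- The complex 2×2 matrix 1 - iY = [[1,-i],[i,1]]. -/
noncomputable def oneMinusIY : Matrix (Fin 2) (Fin 2) ℂ := !![1, -Complex.I; Complex.I, 1]

/-- Real embedding of an observable: Â = 1 ⊗ A_r + Y ⊗ A_i, as a block matrix
[[A_r, A_i], [-A_i, A_r]] on Fin 2 × ι. -/
noncomputable def obsEmbed {ι : Type*} (A : Matrix ι ι ℂ) :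
    Matrix (Fin 2 × ι) (Fin 2 × ι) ℂ :=
  fun p q => (1 : Matrix (Fin 2) (Fin 2) ℂ) p.1 q.1 * ((A p.2 q.2).re : ℂ)
    + Ymat p.1 q.1 * ((A p.2 q.2).im : ℂ)

/-- Real embedding of an n-partite state: the entry at row (a,i), column (b,j) is
2^(-n) · Re[(∏ s, (1-iY)(a s, b s)) · ρ(i,j)]. -/
noncomputable def stateEmbed {n : ℕ} {ι : Fin n → Type*}
    (ρ : Matrix ((s : Fin n) → ι s) ((s : Fin n) → ι s) ℂ) :
    Matrix ((s : Fin n) → Fin 2 × ι s) ((s : Fin n) → Fin 2 × ι s) ℂ :=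
  fun r c =>
    ((((2 : ℝ) ^ n)⁻¹ *
      ((∏ s, oneMinusIY (r s).1 (c s).1) * ρ (fun s => (r s).2) (fun s => (c s).2)).re : ℝ) : ℂ)

/-- Tensor product of one matrix per party. -/
def npTensor {n : ℕ} {ι : Fin n → Type*} (M : (s : Fin n) → Matrix (ι s) (ι s) ℂ) :
    Matrix ((s : Fin n) → ι s) ((s : Fin n) → ι s) ℂ :=
  fun i j => ∏ s, M s (i s) (j s)

/-- Partial transpose across the bipartition m : exchanges row and column index
at every coordinate s ∈ m. -/
def ptm {n : ℕ} {ι : Fin n → Type*} [DecidableEq (Fin n)] (m : Finset (Fin n))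
    (ρ : Matrix ((s : Fin n) → ι s) ((s : Fin n) → ι s) ℂ) :
    Matrix ((s : Fin n) → ι s) ((s : Fin n) → ι s) ℂ :=
  fun i j => ρ (fun s => if s ∈ m then j s else i s) (fun s => if s ∈ m then i s else j s)

/-!
The vector `v = (1, i)` satisfies `v v* = 1 - iY` and `Y v = i v`. Hence `D x = v ⊗ x` defines
maps `D : ℂ^ι → ℂ² ⊗ ℂ^ι` with `D* D = 2` and `obsEmbed A * D = D * A`, and `stateEmbed ρ` is
`2⁻ⁿ` times the entrywise real part of `(⊗ D) ρ (⊗ D)*`. A real matrix `T` is determined by `T *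
D`, so the intertwining relation makes `obsEmbed` multiplicative. As the embedded observables are
real, passing to the real part of the state only takes the real part of the trace, so the
embedding preserves all the probabilities. Conjugation by a product operator commutes with the
partial transpose up to replacing the factors in `m` by their complex conjugates, and taking real
parts preserves positivity and commutes with the partial transpose, so `(stateEmbed ρ)^{T_m}` is
again positive. Finally, the embedded projections are symmetric, so `stateEmbed ρ` can be averaged
with its partial transpose without changing the statistics.
-/

section EntrywiseRe

variable {κ μ : Type*}

/-- The entrywise real part of a complex matrix, again as a complex matrix. -/
def entrywiseRe (A : Matrix κ μ ℂ) : Matrix κ μ ℂ :=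
  A.map fun z => (z.re : ℂ)

lemma entrywiseRe_eq_half_add_transpose {A : Matrix κ κ ℂ} (hA : A.IsHermitian) :
    entrywiseRe A = (1 / 2 : ℝ) • (A + Aᵀ) := by
  ext i j
  have hij : A j i = star (A i j) := (hA.apply j i).symm
  simp only [entrywiseRe, Matrix.map_apply, Matrix.smul_apply, Matrix.add_apply,
    Matrix.transpose_apply, hij, Complex.star_def, Complex.add_conj, Complex.real_smul]
  push_cast
  ring

lemma entrywiseRe_posSemidef {A : Matrix κ κ ℂ} (hA : A.PosSemidef) :
    (entrywiseRe A).PosSemidef := by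
  rw [entrywiseRe_eq_half_add_transpose hA.isHermitian]
  exact (hA.add hA.transpose).smul (by norm_num)

lemma mul_im_eq_zero {ν : Type*} [Fintype μ] {A : Matrix κ μ ℂ} {B : Matrix μ ν ℂ}
    (hA : ∀ p q, (A p q).im = 0) (hB : ∀ p q, (B p q).im = 0) (p : κ) (q : ν) :
    ((A * B) p q).im = 0 := by
  simp only [Matrix.mul_apply, Complex.im_sum, Complex.mul_im, hA, hB, mul_zero, zero_mul,
    add_zero, Finset.sum_const_zero]

lemma trace_entrywiseRe_mul [Fintype κ] [Fintype μ] (A : Matrix κ μ ℂ) {T : Matrix μ κ ℂ}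
    (hT : ∀ p q, (T p q).im = 0) :
    (entrywiseRe A * T).trace = ((A * T).trace.re : ℂ) := by
  have hentry (i : κ) (j : μ) : ((A i j).re : ℂ) * T j i = ((A i j * T j i).re : ℂ) := by
    apply Complex.ext <;> simp [hT]
  simp only [Matrix.trace, Matrix.diag, Matrix.mul_apply, entrywiseRe, Matrix.map_apply, hentry,
    Complex.re_sum, Complex.ofReal_sum]

lemma transpose_eq_self_of_isHermitian_of_im_eq_zero {A : Matrix κ κ ℂ} (hA : A.IsHermitian)
    (him : ∀ p q, (A p q).im = 0) : Aᵀ = A := by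
  ext p q
  rw [Matrix.transpose_apply, ← hA.apply p q, Complex.star_def,
    Complex.conj_eq_iff_im.mpr (him q p)]

end EntrywiseRe

section PiKronecker

variable {σ R : Type*} [Fintype σ] [CommSemiring R] {κ ι μ : σ → Type*}

/-- The tensor product `⊗ s, A s` of a finite family of rectangular matrices; `npTensor` is the case
of square complex matrices indexed by `Fin n`. -/
def piKronecker (A : (s : σ) → Matrix (κ s) (ι s) R) :
    Matrix ((s : σ) → κ s) ((s : σ) → ι s) R :=
  fun i j => ∏ s, A s (i s) (j s)

lemma piKronecker_mul [DecidableEq σ] [∀ s, Fintype (ι s)]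
    (A : (s : σ) → Matrix (κ s) (ι s) R) (B : (s : σ) → Matrix (ι s) (μ s) R) :
    piKronecker A * piKronecker B = piKronecker fun s => A s * B s := by
  ext i j
  simp only [piKronecker, Matrix.mul_apply, Fintype.prod_sum, Finset.prod_mul_distrib]

lemma piKronecker_conjTranspose [StarRing R] (A : (s : σ) → Matrix (κ s) (ι s) R) :
    (piKronecker A)ᴴ = piKronecker fun s => (A s)ᴴ := by
  ext i j
  simp only [piKronecker, Matrix.conjTranspose_apply, star_prod]

lemma piKronecker_smul (c : R) (A : (s : σ) → Matrix (κ s) (ι s) R) :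
    piKronecker (fun s => c • A s) = c ^ Fintype.card σ • piKronecker A := by
  ext i j
  simp only [piKronecker, Matrix.smul_apply, smul_eq_mul, Finset.prod_mul_distrib,
    Finset.prod_const, Finset.card_univ]

lemma piKronecker_one [∀ s, DecidableEq (ι s)] :
    piKronecker (fun s => (1 : Matrix (ι s) (ι s) R)) = 1 := by
  ext i j
  simp only [piKronecker, Matrix.one_apply, Finset.prod_ite_zero, Finset.mem_univ, true_implies,
    Finset.prod_const_one, funext_iff]

lemma piKronecker_im {A : (s : σ) → Matrix (κ s) (ι s) ℂ} (hA : ∀ s p q, (A s p q).im = 0)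
    (p : (s : σ) → κ s) (q : (s : σ) → ι s) : (piKronecker A p q).im = 0 := by
  have hentry (s : σ) : A s (p s) (q s) = ((A s (p s) (q s)).re : ℂ) :=
    Complex.ext rfl (hA s _ _)
  rw [piKronecker, Finset.prod_congr rfl fun s _ => hentry s, ← Complex.ofReal_prod,
    Complex.ofReal_im]

end PiKronecker

section PartialTranspose

variable {n : ℕ} {κ ι : Fin n → Type*}

lemma npTensor_eq_piKronecker (A : (s : Fin n) → Matrix (ι s) (ι s) ℂ) :
    npTensor A = piKronecker A := rfl

lemma ptm_ptm (m : Finset (Fin n)) (ρ : Matrix ((s : Fin n) → ι s) ((s : Fin n) → ι s) ℂ) :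
    ptm m (ptm m ρ) = ρ := by
  ext i j
  simp only [ptm]
  congr 1 <;> ext s <;> by_cases hs : s ∈ m <;> simp only [hs, if_true, if_false]

lemma ptm_npTensor (m : Finset (Fin n)) (A : (s : Fin n) → Matrix (ι s) (ι s) ℂ) :
    ptm m (npTensor A) = npTensor fun s => if s ∈ m then (A s)ᵀ else A s := by
  ext i j
  simp only [ptm, npTensor]
  refine Finset.prod_congr rfl fun s _ => ?_
  by_cases hs : s ∈ m <;> simp only [hs, if_true, if_false, Matrix.transpose_apply]

lemma ptm_npTensor_of_transpose_eq_self (m : Finset (Fin n))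
    {A : (s : Fin n) → Matrix (ι s) (ι s) ℂ} (hA : ∀ s, (A s)ᵀ = A s) :
    ptm m (npTensor A) = npTensor A := by
  simp only [ptm_npTensor, hA, ite_self]

/-- The involution on pairs of multi-indices exchanging their coordinates in `m`; `ptm m` is
reindexing of the entries along it. -/
def swapOn (m : Finset (Fin n)) :
    Equiv.Perm (((s : Fin n) → ι s) × ((s : Fin n) → ι s)) :=
  Function.Involutive.toPerm
    (fun x => (fun s => if s ∈ m then x.2 s else x.1 s, fun s => if s ∈ m then x.1 s else x.2 s))
    (fun x => by
      ext s <;> by_cases hs : s ∈ m <;> simp only [hs, if_true, if_false])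

lemma swapOn_apply (m : Finset (Fin n)) (x : ((s : Fin n) → ι s) × ((s : Fin n) → ι s)) :
    swapOn m x =
      (fun s => if s ∈ m then x.2 s else x.1 s, fun s => if s ∈ m then x.1 s else x.2 s) := rfl

lemma trace_ptm_mul_ptm [∀ s, Fintype (ι s)] (m : Finset (Fin n))
    (ρ τ : Matrix ((s : Fin n) → ι s) ((s : Fin n) → ι s) ℂ) :
    (ptm m ρ * ptm m τ).trace = (ρ * τ).trace := by
  simp only [Matrix.trace, Matrix.diag, Matrix.mul_apply, ← Fintype.sum_prod_type']
  exact Equiv.sum_comp (swapOn m) fun x => ρ x.1 x.2 * τ x.2 x.1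

lemma mul_mul_apply_eq_sum_prod {α β γ δ R : Type*} [Fintype β] [Fintype γ]
    [NonUnitalSemiring R] (A : Matrix α β R) (B : Matrix β γ R) (C : Matrix γ δ R)
    (i : α) (j : δ) : (A * B * C) i j = ∑ x : β × γ, A i x.1 * B x.1 x.2 * C x.2 j := by
  simp only [Matrix.mul_apply, Finset.sum_mul, Fintype.sum_prod_type_right]

lemma ptm_piKronecker_mul_mul_piKronecker [∀ s, Fintype (ι s)] (m : Finset (Fin n))
    (A : (s : Fin n) → Matrix (κ s) (ι s) ℂ) (B : (s : Fin n) → Matrix (ι s) (κ s) ℂ)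
    (ρ : Matrix ((s : Fin n) → ι s) ((s : Fin n) → ι s) ℂ) :
    ptm m (piKronecker A * ρ * piKronecker B) =
      piKronecker (fun s => if s ∈ m then (B s)ᵀ else A s) * ptm m ρ *
        piKronecker (fun s => if s ∈ m then (A s)ᵀ else B s) := by
  ext p q
  rw [ptm, mul_mul_apply_eq_sum_prod, mul_mul_apply_eq_sum_prod, ← Equiv.sum_comp (swapOn m)]
  refine Finset.sum_congr rfl fun x _ => ?_
  rw [mul_right_comm, mul_right_comm (piKronecker _ p x.1)]
  refine congrArg₂ (· * ·) ?_ rfl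
  simp only [piKronecker, ← Finset.prod_mul_distrib]
  refine Finset.prod_congr rfl fun s _ => ?_
  by_cases hs : s ∈ m <;>
    simp only [swapOn_apply, hs, if_true, if_false, Matrix.transpose_apply, mul_comm]

lemma ptm_conj_piKronecker_posSemidef [∀ s, Finite (κ s)] [∀ s, Fintype (ι s)] {m : Finset (Fin n)}
    {ρ : Matrix ((s : Fin n) → ι s) ((s : Fin n) → ι s) ℂ} (hρ : (ptm m ρ).PosSemidef)
    (A : (s : Fin n) → Matrix (κ s) (ι s) ℂ) :
    (ptm m (piKronecker A * ρ * (piKronecker A)ᴴ)).PosSemidef := by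
  have hright : piKronecker (fun s => if s ∈ m then (A s)ᵀ else (A s)ᴴ) =
      (piKronecker fun s => if s ∈ m then (A s)ᴴᵀ else A s)ᴴ := by
    simp only [piKronecker_conjTranspose, apply_ite Matrix.conjTranspose,
      Matrix.conjTranspose_transpose_eq_transpose_conjTranspose, Matrix.conjTranspose_conjTranspose]
  rw [piKronecker_conjTranspose, ptm_piKronecker_mul_mul_piKronecker, hright]
  exact hρ.mul_mul_conjTranspose_same _

/-- The average `(ρ + ρ^{T_m}) / 2`, a projection onto the matrices invariant under the partial
transpose across `m`. -/
noncomputable def ptmAverage (m : Finset (Fin n))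
    (ρ : Matrix ((s : Fin n) → ι s) ((s : Fin n) → ι s) ℂ) :
    Matrix ((s : Fin n) → ι s) ((s : Fin n) → ι s) ℂ :=
  (1 / 2 : ℝ) • (ρ + ptm m ρ)

lemma ptm_ptmAverage (m : Finset (Fin n))
    (ρ : Matrix ((s : Fin n) → ι s) ((s : Fin n) → ι s) ℂ) :
    ptm m (ptmAverage m ρ) = ptmAverage m ρ := by
  calc ptm m (ptmAverage m ρ) = (1 / 2 : ℝ) • (ptm m ρ + ptm m (ptm m ρ)) := rfl
    _ = ptmAverage m ρ := by rw [ptm_ptm, add_comm, ptmAverage]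

lemma ptmAverage_posSemidef {m : Finset (Fin n)}
    {ρ : Matrix ((s : Fin n) → ι s) ((s : Fin n) → ι s) ℂ} (hρ : ρ.PosSemidef)
    (hppt : (ptm m ρ).PosSemidef) : (ptmAverage m ρ).PosSemidef :=
  (hρ.add hppt).smul (by norm_num)

lemma ptmAverage_im (m : Finset (Fin n))
    {ρ : Matrix ((s : Fin n) → ι s) ((s : Fin n) → ι s) ℂ} (hρ : ∀ p q, (ρ p q).im = 0)
    (p q : (s : Fin n) → ι s) : (ptmAverage m ρ p q).im = 0 := by
  simp only [ptmAverage, ptm, Matrix.smul_apply, Matrix.add_apply, Complex.smul_im,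
    Complex.add_im, hρ, add_zero, smul_zero]

lemma trace_ptmAverage_mul [∀ s, Fintype (ι s)] {m : Finset (Fin n)}
    (ρ : Matrix ((s : Fin n) → ι s) ((s : Fin n) → ι s) ℂ)
    {τ : Matrix ((s : Fin n) → ι s) ((s : Fin n) → ι s) ℂ} (hτ : ptm m τ = τ) :
    (ptmAverage m ρ * τ).trace = (ρ * τ).trace := by
  have hpt : (ptm m ρ * τ).trace = (ρ * τ).trace := by
    conv_lhs => rw [← hτ]
    exact trace_ptm_mul_ptm m ρ τ
  rw [ptmAverage, Matrix.smul_mul, Matrix.trace_smul, add_mul, Matrix.trace_add, hpt, ← two_smul ℝ,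
    smul_smul]
  norm_num

end PartialTranspose

section ObsEmbed

/-- The eigenvector `v = (1, i)` of `Y` for the eigenvalue `i`, satisfying `v v* = 1 - iY`. -/
def eigvecY : Fin 2 → ℂ := ![1, Complex.I]

lemma Ymat_mulVec_eigvecY : Ymat *ᵥ eigvecY = Complex.I • eigvecY := by
  ext a
  fin_cases a <;> simp [Ymat, eigvecY, Matrix.mulVec, dotProduct]

lemma star_eigvecY_dotProduct_eigvecY : star eigvecY ⬝ᵥ eigvecY = 2 := by
  simp [eigvecY, dotProduct, one_add_one_eq_two]

lemma oneMinusIY_eq_vecMulVec : oneMinusIY = vecMulVec eigvecY (star eigvecY) := by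
  ext a b
  fin_cases a <;> fin_cases b <;> simp [oneMinusIY, eigvecY, vecMulVec_apply]

/-- The matrix of `x ↦ (1, i) ⊗ x`, which is `√2` times an isometry and intertwines a complex matrix
with its real embedding. -/
def doubling (ι : Type*) [DecidableEq ι] : Matrix (Fin 2 × ι) ι ℂ :=
  fun p i => eigvecY p.1 * (1 : Matrix ι ι ℂ) p.2 i

variable {κ ι : Type*}

section Fintype

variable [Fintype ι]

lemma mul_doubling_apply [DecidableEq ι] (T : Matrix κ (Fin 2 × ι) ℂ) (p : κ) (j : ι) :
    (T * doubling ι) p j = ∑ b, T p (b, j) * eigvecY b := by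
  simp [doubling, Matrix.mul_apply, Fintype.sum_prod_type, Matrix.one_apply]

lemma eq_of_mul_doubling_eq [DecidableEq ι] {S T : Matrix κ (Fin 2 × ι) ℂ}
    (hS : ∀ p q, (S p q).im = 0) (hT : ∀ p q, (T p q).im = 0)
    (h : S * doubling ι = T * doubling ι) : S = T := by
  ext p ⟨b, j⟩
  have hpj : S p (0, j) + S p (1, j) * Complex.I = T p (0, j) + T p (1, j) * Complex.I := by
    simpa [mul_doubling_apply, eigvecY] using congrFun₂ h p j
  have hzero : (S p (0, j)).re = (T p (0, j)).re := by
    simpa [hS, hT] using congrArg Complex.re hpj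
  have hone : (S p (1, j)).re = (T p (1, j)).re := by
    simpa [hS, hT] using congrArg Complex.im hpj
  refine Complex.ext ?_ ((hS _ _).trans (hT _ _).symm)
  fin_cases b
  · exact hzero
  · exact hone

lemma conjTranspose_doubling_mul_doubling [DecidableEq ι] :
    (doubling ι)ᴴ * doubling ι = (2 : ℂ) • 1 := by
  ext i j
  calc ((doubling ι)ᴴ * doubling ι) i j
      = (star eigvecY ⬝ᵥ eigvecY) * (1 : Matrix ι ι ℂ) i j := by
        simp only [mul_doubling_apply, Matrix.conjTranspose_apply, doubling, star_mul', dotProduct,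
          Finset.sum_mul, Pi.star_apply]
        refine Finset.sum_congr rfl fun b _ => ?_
        rw [← Matrix.conjTranspose_apply, Matrix.conjTranspose_one, mul_right_comm]
    _ = ((2 : ℂ) • (1 : Matrix ι ι ℂ)) i j := by
        rw [star_eigvecY_dotProduct_eigvecY, Matrix.smul_apply, smul_eq_mul]

lemma obsEmbed_mul_doubling [DecidableEq ι] (A : Matrix ι ι ℂ) :
    obsEmbed A * doubling ι = doubling ι * A := by
  ext ⟨a, i⟩ j
  calc (obsEmbed A * doubling ι) (a, i) j
      = ((1 : Matrix (Fin 2) (Fin 2) ℂ) *ᵥ eigvecY) a * (A i j).re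
          + (Ymat *ᵥ eigvecY) a * (A i j).im := by
        simp only [mul_doubling_apply, obsEmbed, Matrix.mulVec, dotProduct, Finset.sum_mul,
          ← Finset.sum_add_distrib]
        exact Finset.sum_congr rfl fun b _ => by ring
    _ = eigvecY a * ((A i j).re + (A i j).im * Complex.I) := by
        rw [Matrix.one_mulVec, Ymat_mulVec_eigvecY, Pi.smul_apply, smul_eq_mul]
        ring
    _ = (doubling ι * A) (a, i) j := by
        simp [Complex.re_add_im, doubling, Matrix.mul_apply, Matrix.one_apply]

lemma conjTranspose_doubling_mul_obsEmbed_mul_doubling [DecidableEq ι] (A : Matrix ι ι ℂ) :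
    (doubling ι)ᴴ * obsEmbed A * doubling ι = (2 : ℂ) • A := by
  rw [Matrix.mul_assoc, obsEmbed_mul_doubling, ← Matrix.mul_assoc,
    conjTranspose_doubling_mul_doubling, Matrix.smul_mul, Matrix.one_mul]

end Fintype

lemma obsEmbed_im (A : Matrix ι ι ℂ) (p q : Fin 2 × ι) : (obsEmbed A p q).im = 0 := by
  obtain ⟨a, i⟩ := p
  obtain ⟨b, j⟩ := q
  fin_cases a <;> fin_cases b <;> simp [obsEmbed, Ymat]

lemma obsEmbed_mul [Fintype ι] (A B : Matrix ι ι ℂ) :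
    obsEmbed (A * B) = obsEmbed A * obsEmbed B := by
  classical
  refine eq_of_mul_doubling_eq (obsEmbed_im _)
    (mul_im_eq_zero (obsEmbed_im A) (obsEmbed_im B)) ?_
  rw [Matrix.mul_assoc, obsEmbed_mul_doubling, obsEmbed_mul_doubling, ← Matrix.mul_assoc,
    ← Matrix.mul_assoc, obsEmbed_mul_doubling]

lemma obsEmbed_one [DecidableEq ι] : obsEmbed (1 : Matrix ι ι ℂ) = 1 := by
  ext ⟨a, i⟩ ⟨b, j⟩
  by_cases h : i = j <;> fin_cases a <;> fin_cases b <;>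
    simp [obsEmbed, Ymat, Matrix.one_apply, h]

lemma obsEmbed_sum {O : Type*} (t : Finset O) (A : O → Matrix ι ι ℂ) :
    obsEmbed (∑ o ∈ t, A o) = ∑ o ∈ t, obsEmbed (A o) := by
  ext p q
  simp only [obsEmbed, Matrix.sum_apply, Complex.re_sum, Complex.im_sum, Complex.ofReal_sum,
    Finset.mul_sum, Finset.sum_add_distrib]

lemma obsEmbed_conjTranspose (A : Matrix ι ι ℂ) : obsEmbed Aᴴ = (obsEmbed A)ᴴ := by
  ext ⟨a, i⟩ ⟨b, j⟩
  fin_cases a <;> fin_cases b <;> simp [obsEmbed, Ymat]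

lemma obsEmbed_isHermitian {A : Matrix ι ι ℂ} (hA : A.IsHermitian) :
    (obsEmbed A).IsHermitian := by
  rw [Matrix.IsHermitian, ← obsEmbed_conjTranspose, hA.eq]

lemma obsEmbed_transpose_of_isHermitian {A : Matrix ι ι ℂ} (hA : A.IsHermitian) :
    (obsEmbed A)ᵀ = obsEmbed A :=
  transpose_eq_self_of_isHermitian_of_im_eq_zero (obsEmbed_isHermitian hA) (obsEmbed_im A)

end ObsEmbed

section StateEmbed

variable {n : ℕ} {ι : Fin n → Type*}

lemma stateEmbed_im (ρ : Matrix ((s : Fin n) → ι s) ((s : Fin n) → ι s) ℂ)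
    (p q : (s : Fin n) → Fin 2 × ι s) : (stateEmbed ρ p q).im = 0 :=
  Complex.ofReal_im _

section DoubledState

variable [∀ s, DecidableEq (ι s)]

lemma piKronecker_doubling_apply (r : (s : Fin n) → Fin 2 × ι s) (i : (s : Fin n) → ι s) :
    piKronecker (fun s => doubling (ι s)) r i =
      (∏ s, eigvecY (r s).1) * (1 : Matrix ((s : Fin n) → ι s) _ ℂ) (fun s => (r s).2) i := by
  rw [← piKronecker_one]
  exact Finset.prod_mul_distrib

variable [∀ s, Fintype (ι s)]

/-- The complex matrix on the doubled spaces whose real part is, up to normalization, the real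
embedding of a state: `ρ` conjugated by `doubling` at every party. -/
def doubledState (ρ : Matrix ((s : Fin n) → ι s) ((s : Fin n) → ι s) ℂ) :
    Matrix ((s : Fin n) → Fin 2 × ι s) ((s : Fin n) → Fin 2 × ι s) ℂ :=
  piKronecker (fun s => doubling (ι s)) * ρ * (piKronecker fun s => doubling (ι s))ᴴ

lemma doubledState_apply (ρ : Matrix ((s : Fin n) → ι s) ((s : Fin n) → ι s) ℂ)
    (r c : (s : Fin n) → Fin 2 × ι s) :
    doubledState ρ r c =
      (∏ s, oneMinusIY (r s).1 (c s).1) * ρ (fun s => (r s).2) (fun s => (c s).2) := by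
  simp only [doubledState, Matrix.mul_apply, Matrix.conjTranspose_apply,
    piKronecker_doubling_apply, Matrix.one_apply, oneMinusIY_eq_vecMulVec, vecMulVec_apply,
    Finset.prod_mul_distrib]
  simp [mul_right_comm, apply_ite]

lemma stateEmbed_eq_smul_entrywiseRe (ρ : Matrix ((s : Fin n) → ι s) ((s : Fin n) → ι s) ℂ) :
    stateEmbed ρ = ((2 : ℝ) ^ n)⁻¹ • entrywiseRe (doubledState ρ) := by
  ext r c
  simp only [stateEmbed, Matrix.smul_apply, entrywiseRe, Matrix.map_apply, doubledState_apply,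
    Complex.real_smul, Complex.ofReal_mul]

lemma trace_doubledState_mul_npTensor_obsEmbed
    (ρ : Matrix ((s : Fin n) → ι s) ((s : Fin n) → ι s) ℂ)
    (A : (s : Fin n) → Matrix (ι s) (ι s) ℂ) :
    (doubledState ρ * npTensor fun s => obsEmbed (A s)).trace =
      2 ^ n * (ρ * npTensor A).trace := by
  set D := piKronecker fun s => doubling (ι s) with hD
  have hcompress : Dᴴ * (npTensor fun s => obsEmbed (A s)) * D = (2 : ℂ) ^ n • npTensor A := by
    simp only [hD, npTensor_eq_piKronecker, piKronecker_conjTranspose, piKronecker_mul,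
      conjTranspose_doubling_mul_obsEmbed_mul_doubling, piKronecker_smul, Fintype.card_fin]
  calc (doubledState ρ * npTensor fun s => obsEmbed (A s)).trace
      = (D * (ρ * (Dᴴ * npTensor fun s => obsEmbed (A s)))).trace := by
        simp only [doubledState, hD, Matrix.mul_assoc]
    _ = (ρ * (Dᴴ * (npTensor fun s => obsEmbed (A s)) * D)).trace := by
        rw [Matrix.trace_mul_comm, Matrix.mul_assoc]
    _ = 2 ^ n * (ρ * npTensor A).trace := by
        rw [hcompress, Matrix.mul_smul, Matrix.trace_smul, smul_eq_mul]

end DoubledState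

lemma stateEmbed_posSemidef [∀ s, Finite (ι s)]
    {ρ : Matrix ((s : Fin n) → ι s) ((s : Fin n) → ι s) ℂ} (hρ : ρ.PosSemidef) :
    (stateEmbed ρ).PosSemidef := by
  classical
  let _ (s : Fin n) := Fintype.ofFinite (ι s)
  rw [stateEmbed_eq_smul_entrywiseRe]
  exact (entrywiseRe_posSemidef (hρ.mul_mul_conjTranspose_same _)).smul (by positivity)

lemma ptm_stateEmbed_posSemidef [∀ s, Finite (ι s)] {m : Finset (Fin n)}
    {ρ : Matrix ((s : Fin n) → ι s) ((s : Fin n) → ι s) ℂ} (hρ : (ptm m ρ).PosSemidef) :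
    (ptm m (stateEmbed ρ)).PosSemidef := by
  classical
  let _ (s : Fin n) := Fintype.ofFinite (ι s)
  have hptm : ptm m (stateEmbed ρ) =
      ((2 : ℝ) ^ n)⁻¹ • entrywiseRe (ptm m (doubledState ρ)) := by
    rw [stateEmbed_eq_smul_entrywiseRe]
    rfl
  rw [hptm]
  exact (entrywiseRe_posSemidef (ptm_conj_piKronecker_posSemidef hρ _)).smul (by positivity)

variable [∀ s, Fintype (ι s)]

lemma trace_stateEmbed_mul_npTensor_obsEmbed
    (ρ : Matrix ((s : Fin n) → ι s) ((s : Fin n) → ι s) ℂ)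
    (A : (s : Fin n) → Matrix (ι s) (ι s) ℂ) :
    (stateEmbed ρ * npTensor fun s => obsEmbed (A s)).trace = ((ρ * npTensor A).trace.re : ℂ) := by
  classical
  have hre : ((2 : ℂ) ^ n * (ρ * npTensor A).trace).re = 2 ^ n * (ρ * npTensor A).trace.re :=
    mod_cast Complex.re_ofReal_mul (2 ^ n) (ρ * npTensor A).trace
  have him : ∀ p q, (npTensor (fun s => obsEmbed (A s)) p q).im = 0 :=
    piKronecker_im fun s => obsEmbed_im (A s)
  rw [stateEmbed_eq_smul_entrywiseRe, Matrix.smul_mul, Matrix.trace_smul,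
    trace_entrywiseRe_mul _ him, trace_doubledState_mul_npTensor_obsEmbed, hre,
    Complex.real_smul, ← Complex.ofReal_mul, inv_mul_cancel_left₀ (by positivity)]

lemma trace_ptmAverage_stateEmbed_mul_npTensor_obsEmbed (m : Finset (Fin n))
    (ρ : Matrix ((s : Fin n) → ι s) ((s : Fin n) → ι s) ℂ)
    {A : (s : Fin n) → Matrix (ι s) (ι s) ℂ} (hA : ∀ s, (A s).IsHermitian) :
    (ptmAverage m (stateEmbed ρ) * npTensor fun s => obsEmbed (A s)).trace =
      ((ρ * npTensor A).trace.re : ℂ) := by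
  rw [trace_ptmAverage_mul _ (ptm_npTensor_of_transpose_eq_self m fun s =>
    obsEmbed_transpose_of_isHermitian (hA s)), trace_stateEmbed_mul_npTensor_obsEmbed]

lemma trace_ptmAverage_stateEmbed (m : Finset (Fin n))
    (ρ : Matrix ((s : Fin n) → ι s) ((s : Fin n) → ι s) ℂ) :
    (ptmAverage m (stateEmbed ρ)).trace = (ρ.trace.re : ℂ) := by
  classical
  have h := trace_ptmAverage_stateEmbed_mul_npTensor_obsEmbed m ρ
    (A := fun s => (1 : Matrix (ι s) (ι s) ℂ)) fun s => Matrix.isHermitian_one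
  simpa only [obsEmbed_one, npTensor_eq_piKronecker, piKronecker_one, mul_one] using h

end StateEmbed

/-- Proposition 1(a): if the given quantum representation uses a state ρ
with positive semidefinite partial transpose across a bipartition m, then the distribution
has a quantum representation on the doubled spaces by a real, PPT-invariant state
(ρ' = ρ'ᵀ = ρ'^{T_m}) together with real symmetric projections. -/
theorem real_PPT_invariant_quantum_representation
    {n : ℕ} {ι X O : Fin n → Type*}
    [∀ s, Fintype (ι s)] [∀ s, Nonempty (ι s)] [∀ s, DecidableEq (ι s)]
    [∀ s, Fintype (O s)]
    (ρ : Matrix ((s : Fin n) → ι s) ((s : Fin n) → ι s) ℂ)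
    (hρ : ρ.PosSemidef) (htr : Matrix.trace ρ = 1)
    (m : Finset (Fin n)) (hppt : (ptm m ρ).PosSemidef)
    (M : (s : Fin n) → X s → O s → Matrix (ι s) (ι s) ℂ)
    (hMh : ∀ s x a, (M s x a).IsHermitian)
    (hMi : ∀ s x a, M s x a * M s x a = M s x a)
    (hMs : ∀ s x, ∑ a, M s x a = 1)
    (P : ((s : Fin n) → O s) → ((s : Fin n) → X s) → ℝ)
    (hP : ∀ a x, (P a x : ℂ) = Matrix.trace (ρ * npTensor (fun s => M s (x s) (a s)))) :
    ∃ (ρ' : Matrix ((s : Fin n) → Fin 2 × ι s) ((s : Fin n) → Fin 2 × ι s) ℂ)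
      (M' : (s : Fin n) → X s → O s → Matrix (Fin 2 × ι s) (Fin 2 × ι s) ℂ),
      ρ'.PosSemidef ∧ Matrix.trace ρ' = 1 ∧
      (∀ p q, (ρ' p q).im = 0) ∧ ρ'ᵀ = ρ' ∧ ptm m ρ' = ρ' ∧
      (∀ s x a, (M' s x a).IsHermitian ∧ M' s x a * M' s x a = M' s x a ∧
        (∀ p q, ((M' s x a) p q).im = 0) ∧ (M' s x a)ᵀ = M' s x a) ∧
      (∀ s x, ∑ a, M' s x a = 1) ∧
      (∀ a x, (P a x : ℂ) = Matrix.trace (ρ' * npTensor (fun s => M' s (x s) (a s)))) := by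
  have hpsd : (ptmAverage m (stateEmbed ρ)).PosSemidef :=
    ptmAverage_posSemidef (stateEmbed_posSemidef hρ) (ptm_stateEmbed_posSemidef hppt)
  have hreal := ptmAverage_im m (stateEmbed_im ρ)
  refine ⟨ptmAverage m (stateEmbed ρ), fun s x a => obsEmbed (M s x a), hpsd, ?_, hreal,
    transpose_eq_self_of_isHermitian_of_im_eq_zero hpsd.isHermitian hreal, ptm_ptmAverage m _,
    fun s x a => ⟨obsEmbed_isHermitian (hMh s x a), ?_, obsEmbed_im _,
      obsEmbed_transpose_of_isHermitian (hMh s x a)⟩, fun s x => ?_, fun a x => ?_⟩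
  · rw [trace_ptmAverage_stateEmbed, htr, Complex.one_re, Complex.ofReal_one]
  · rw [← obsEmbed_mul, hMi]
  · rw [← obsEmbed_sum, hMs, obsEmbed_one]
  · rw [trace_ptmAverage_stateEmbed_mul_npTensor_obsEmbed m ρ fun s => hMh s (x s) (a s), ← hP,
      Complex.ofReal_re]
end

section
/- PPT states satisfy the CHSH inequality (the PPT Tsirelson bound of CHSH is 2): let ρ be a bipartite quantum state on ι_A × ι_B with ρ^{T_A} positive semidefinite, and let A₁, A₂ be dichotomic observables on ι_A and B₁, B₂ dichotomic observables on ι_B. Then the CHSH value satisfies v ≤ 2. -/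
open Matrix
open scoped Kronecker ComplexOrder

/-!
For a state `ρ` and the CHSH operator `C` with `v = tr (ρ C)`, nonnegativity of the variance of `C`
gives `v² ≤ tr (ρ C²) = 4 - tr (ρ (⁅A₁, A₂⁆ ⊗ ⁅B₁, B₂⁆))`. If `ρ^{T_A}` is also a state, the same
bound applies to it with the observables `A₁ᵀ, A₂ᵀ`. Its CHSH value is again `v`, but transposition
reverses products, hence flips the sign of `⁅A₁, A₂⁆`. Adding the two bounds cancels the commutator
terms and leaves `v² ≤ 4`.
-/

section Variance

variable {𝕜 n : Type*} [RCLike 𝕜] [Fintype n]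

theorem re_trace_mul_mul_self_nonneg {ρ X : Matrix n n 𝕜} (hρ : ρ.PosSemidef)
    (hX : X.IsHermitian) : 0 ≤ RCLike.re (ρ * (X * X)).trace := by
  have h : 0 ≤ (Xᴴ * ρ * X).trace := (hρ.conjTranspose_mul_mul_same X).trace_nonneg
  rw [hX.eq, trace_mul_cycle, trace_mul_comm] at h
  exact (RCLike.nonneg_iff.mp h).1

theorem sq_re_trace_mul_le {ρ X : Matrix n n 𝕜} (hρ : ρ.PosSemidef) (htr : ρ.trace = 1)
    (hX : X.IsHermitian) :
    RCLike.re (ρ * X).trace ^ 2 ≤ RCLike.re (ρ * (X * X)).trace := by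
  classical
  set v : ℝ := RCLike.re (ρ * X).trace with hv
  have hXv : (X - (v : 𝕜) • (1 : Matrix n n 𝕜)).IsHermitian :=
    hX.sub (isHermitian_one.smul (RCLike.conj_ofReal v))
  have variance_nonneg := re_trace_mul_mul_self_nonneg hρ hXv
  have variance_eq :
      RCLike.re (ρ * ((X - (v : 𝕜) • (1 : Matrix n n 𝕜)) * (X - (v : 𝕜) • 1))).trace =
        RCLike.re (ρ * (X * X)).trace - v ^ 2 := by
    simp only [sub_mul, mul_sub, smul_mul_assoc, mul_smul_comm, one_mul, mul_one, trace_sub,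
      trace_smul, htr, smul_eq_mul, map_sub, RCLike.re_ofReal_mul, RCLike.ofReal_re, ← hv]
    ring
  linarith

end Variance

section Kronecker

variable {R l m n p : Type*} [Mul R] [HasDistribNeg R]

theorem neg_kronecker (A : Matrix l m R) (B : Matrix n p R) : (-A) ⊗ₖ B = -(A ⊗ₖ B) :=
  ext fun _ _ => neg_mul _ _

theorem kronecker_neg (A : Matrix l m R) (B : Matrix n p R) : A ⊗ₖ (-B) = -(A ⊗ₖ B) :=
  ext fun _ _ => mul_neg _ _

end Kronecker

section CHSHOperator

variable {R m n : Type*} [CommRing R]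

/-- A dichotomic observable: a Hermitian matrix squaring to the identity, that is, a measurement
with outcomes `±1`. -/
structure IsDichotomicObservable [StarRing R] [Fintype n] [DecidableEq n] (A : Matrix n n R) :
    Prop where
  isHermitian : A.IsHermitian
  mul_self : A * A = 1

theorem IsDichotomicObservable.transpose [StarRing R] [Fintype n] [DecidableEq n]
    {A : Matrix n n R} (hA : IsDichotomicObservable A) : IsDichotomicObservable Aᵀ where
  isHermitian := hA.isHermitian.transpose
  mul_self := by rw [← transpose_mul, hA.mul_self, transpose_one]

/-- The CHSH (Bell) operator, whose expectation in a bipartite state is the CHSH value. -/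
def chshOperator (A₁ A₂ : Matrix m m R) (B₁ B₂ : Matrix n n R) : Matrix (m × n) (m × n) R :=
  A₁ ⊗ₖ B₁ + A₁ ⊗ₖ B₂ + A₂ ⊗ₖ B₁ - A₂ ⊗ₖ B₂

theorem isHermitian_chshOperator [StarRing R] {A₁ A₂ : Matrix m m R} {B₁ B₂ : Matrix n n R}
    (hA₁ : A₁.IsHermitian) (hA₂ : A₂.IsHermitian) (hB₁ : B₁.IsHermitian) (hB₂ : B₂.IsHermitian) :
    (chshOperator A₁ A₂ B₁ B₂).IsHermitian := by
  simp only [IsHermitian, chshOperator, conjTranspose_add, conjTranspose_sub,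
    conjTranspose_kronecker, hA₁.eq, hA₂.eq, hB₁.eq, hB₂.eq]

variable [Fintype m] [DecidableEq m] [Fintype n] [DecidableEq n]

theorem chshOperator_mul_self {A₁ A₂ : Matrix m m R} {B₁ B₂ : Matrix n n R}
    (hA₁ : A₁ * A₁ = 1) (hA₂ : A₂ * A₂ = 1) (hB₁ : B₁ * B₁ = 1) (hB₂ : B₂ * B₂ = 1) :
    chshOperator A₁ A₂ B₁ B₂ * chshOperator A₁ A₂ B₁ B₂ = 4 - ⁅A₁, A₂⁆ ⊗ₖ ⁅B₁, B₂⁆ := by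
  have four_eq : (4 : Matrix (m × n) (m × n) R) = 1 + 1 + 1 + 1 := by norm_num
  simp only [four_eq, chshOperator, Ring.lie_def, sub_eq_add_neg, add_mul, mul_add, neg_mul,
    mul_neg, ← mul_kronecker_mul, hA₁, hA₂, hB₁, hB₂, one_kronecker_one, add_kronecker,
    kronecker_add, neg_kronecker, kronecker_neg]
  abel

end CHSHOperator

theorem sq_re_trace_mul_chshOperator_le {𝕜 m n : Type*} [RCLike 𝕜] [Fintype m] [DecidableEq m]
    [Fintype n] [DecidableEq n] {ρ : Matrix (m × n) (m × n) 𝕜} (hρ : ρ.PosSemidef)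
    (htr : ρ.trace = 1) {A₁ A₂ : Matrix m m 𝕜} {B₁ B₂ : Matrix n n 𝕜}
    (hA₁ : IsDichotomicObservable A₁) (hA₂ : IsDichotomicObservable A₂)
    (hB₁ : IsDichotomicObservable B₁) (hB₂ : IsDichotomicObservable B₂) :
    RCLike.re (ρ * chshOperator A₁ A₂ B₁ B₂).trace ^ 2 ≤
      4 - RCLike.re (ρ * ⁅A₁, A₂⁆ ⊗ₖ ⁅B₁, B₂⁆).trace := by
  have hC := isHermitian_chshOperator hA₁.isHermitian hA₂.isHermitian hB₁.isHermitian
    hB₂.isHermitian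
  have trace_four : (ρ * 4).trace = 4 := by
    rw [← Nat.cast_ofNat, ← nsmul_eq_mul', trace_smul, htr, nsmul_one, Nat.cast_ofNat]
  calc RCLike.re (ρ * chshOperator A₁ A₂ B₁ B₂).trace ^ 2
      ≤ RCLike.re (ρ * (chshOperator A₁ A₂ B₁ B₂ * chshOperator A₁ A₂ B₁ B₂)).trace :=
        sq_re_trace_mul_le hρ htr hC
    _ = 4 - RCLike.re (ρ * ⁅A₁, A₂⁆ ⊗ₖ ⁅B₁, B₂⁆).trace := by
        rw [chshOperator_mul_self hA₁.mul_self hA₂.mul_self hB₁.mul_self hB₂.mul_self, mul_sub,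
          trace_sub, trace_four, map_sub, RCLike.ofNat_re]

section PartialTranspose

variable {ιA ιB : Type*}

theorem ptA_kronecker (M : Matrix ιA ιA ℂ) (N : Matrix ιB ιB ℂ) : ptA (M ⊗ₖ N) = Mᵀ ⊗ₖ N :=
  rfl

theorem ptA_chshOperator (A₁ A₂ : Matrix ιA ιA ℂ) (B₁ B₂ : Matrix ιB ιB ℂ) :
    ptA (chshOperator A₁ A₂ B₁ B₂) = chshOperator A₁ᵀ A₂ᵀ B₁ B₂ :=
  rfl

variable [Fintype ιA] [Fintype ιB]

theorem trace_ptA (ρ : Matrix (ιA × ιB) (ιA × ιB) ℂ) : (ptA ρ).trace = ρ.trace :=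
  rfl

theorem trace_ptA_mul (ρ X : Matrix (ιA × ιB) (ιA × ιB) ℂ) :
    (ptA ρ * X).trace = (ρ * ptA X).trace := by
  simp only [trace, diag_apply, mul_apply, ptA, ← Fintype.sum_prod_type']
  let swapA : (ιA × ιB) × ιA × ιB ≃ (ιA × ιB) × ιA × ιB :=
    { toFun := fun x => ((x.2.1, x.1.2), (x.1.1, x.2.2))
      invFun := fun x => ((x.2.1, x.1.2), (x.1.1, x.2.2)) }
  exact Fintype.sum_equiv swapA _ _ fun _ => rfl

theorem trace_ptA_mul_chshOperator_transpose (ρ : Matrix (ιA × ιB) (ιA × ιB) ℂ)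
    (A₁ A₂ : Matrix ιA ιA ℂ) (B₁ B₂ : Matrix ιB ιB ℂ) :
    (ptA ρ * chshOperator A₁ᵀ A₂ᵀ B₁ B₂).trace = (ρ * chshOperator A₁ A₂ B₁ B₂).trace := by
  rw [trace_ptA_mul, ptA_chshOperator, transpose_transpose, transpose_transpose]

theorem trace_ptA_mul_lie_transpose_kronecker (ρ : Matrix (ιA × ιB) (ιA × ιB) ℂ)
    (A₁ A₂ : Matrix ιA ιA ℂ) (N : Matrix ιB ιB ℂ) :
    (ptA ρ * ⁅A₁ᵀ, A₂ᵀ⁆ ⊗ₖ N).trace = -(ρ * ⁅A₁, A₂⁆ ⊗ₖ N).trace := by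
  have lie_transpose_transpose : ⁅A₁ᵀ, A₂ᵀ⁆ᵀ = -⁅A₁, A₂⁆ := by
    simp only [Ring.lie_def, transpose_sub, transpose_mul, transpose_transpose, neg_sub]
  rw [trace_ptA_mul, ptA_kronecker, lie_transpose_transpose, neg_kronecker, mul_neg, trace_neg]

end PartialTranspose

/-- PPT states satisfy the CHSH inequality; the PPT Tsirelson bound of
CHSH is 2. -/
theorem ppt_states_satisfy_chsh
    {ιA ιB : Type*} [Fintype ιA] [Fintype ιB] [Nonempty ιA] [Nonempty ιB]
    [DecidableEq ιA] [DecidableEq ιB]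
    (ρ : Matrix (ιA × ιB) (ιA × ιB) ℂ) (hρ : ρ.PosSemidef) (htr : Matrix.trace ρ = 1)
    (hppt : (ptA ρ).PosSemidef)
    (A₁ A₂ : Matrix ιA ιA ℂ) (B₁ B₂ : Matrix ιB ιB ℂ)
    (hA₁ : A₁.IsHermitian) (hA₂ : A₂.IsHermitian)
    (hB₁ : B₁.IsHermitian) (hB₂ : B₂.IsHermitian)
    (hA₁d : A₁ * A₁ = 1) (hA₂d : A₂ * A₂ = 1) (hB₁d : B₁ * B₁ = 1) (hB₂d : B₂ * B₂ = 1) :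
    (Matrix.trace (ρ * (A₁ ⊗ₖ B₁ + A₁ ⊗ₖ B₂ + A₂ ⊗ₖ B₁ - A₂ ⊗ₖ B₂))).re ≤ 2 := by
  have hA₁' : IsDichotomicObservable A₁ := ⟨hA₁, hA₁d⟩
  have hA₂' : IsDichotomicObservable A₂ := ⟨hA₂, hA₂d⟩
  have hB₁' : IsDichotomicObservable B₁ := ⟨hB₁, hB₁d⟩
  have hB₂' : IsDichotomicObservable B₂ := ⟨hB₂, hB₂d⟩
  have bound := sq_re_trace_mul_chshOperator_le hρ htr hA₁' hA₂' hB₁' hB₂'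
  have bound_ptA := sq_re_trace_mul_chshOperator_le hppt ((trace_ptA ρ).trans htr)
    hA₁'.transpose hA₂'.transpose hB₁' hB₂'
  rw [trace_ptA_mul_chshOperator_transpose, trace_ptA_mul_lie_transpose_kronecker,
    map_neg] at bound_ptA
  have sq_le : (ρ * chshOperator A₁ A₂ B₁ B₂).trace.re ^ 2 ≤ 2 ^ 2 := by
    simp only [RCLike.re_eq_complex_re] at bound bound_ptA
    linarith
  exact le_of_abs_le (abs_le_of_sq_le_sq sq_le zero_le_two)
end
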